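/- Soundness of the syntactic assume rule (AssumeS): for every syntactic Boolean state expression p with semantic interpretation ⟦p⟧ : PStates → Bool and every closed syntactic hyper-assertion A, the hyper-triple ⊨ {Π_p(A)} (assume ⟦p⟧) {A} is valid, where Π_p is defined recursively on syntactic hyper-assertions by Π_p(∀⟨φ⟩. A) := ∀⟨φ⟩. (p[φ] ⇒ Π_p(A)) and Π_p(∃⟨φ⟩. A) := ∃⟨φ⟩. (p[φ] ∧ Π_p(A)), acting homomorphically on all other constructors, and p[φ] denotes the instantiation of p in which every program-variable lookup x' is read as φ^P(x'); each syntactic hyper-assertion is interpreted as the hyper-assertion λS. (S satisfies it). -/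

import Mathlib

/-- Commands of the programming language. -/
inductive Cmd (PVar PVal : Type) : Type where
  | skip : Cmd PVar PVal
  | assign : PVar → ((PVar → PVal) → PVal) → Cmd PVar PVal
  | havoc : PVar → Cmd PVar PVal
  | assume : ((PVar → PVal) → Prop) → Cmd PVar PVal
  | seq : Cmd PVar PVal → Cmd PVar PVal → Cmd PVar PVal
  | choice : Cmd PVar PVal → Cmd PVar PVal → Cmd PVar PVal
  | iter : Cmd PVar PVal → Cmd PVar PVal

/-- Big-step semantics ⟨C, σ⟩ → σ'. -/
inductive BigStep {PVar PVal : Type} [DecidableEq PVar] :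
    Cmd PVar PVal → (PVar → PVal) → (PVar → PVal) → Prop where
  | skip (σ : PVar → PVal) : BigStep Cmd.skip σ σ
  | assign (x : PVar) (e : (PVar → PVal) → PVal) (σ : PVar → PVal) :
      BigStep (Cmd.assign x e) σ (Function.update σ x (e σ))
  | havoc (x : PVar) (σ : PVar → PVal) (v : PVal) :
      BigStep (Cmd.havoc x) σ (Function.update σ x v)
  | assume {b : (PVar → PVal) → Prop} {σ : PVar → PVal} (h : b σ) :
      BigStep (Cmd.assume b) σ σ
  | seq {C1 C2 : Cmd PVar PVal} {σ σ' σ'' : PVar → PVal} :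
      BigStep C1 σ σ' → BigStep C2 σ' σ'' → BigStep (Cmd.seq C1 C2) σ σ''
  | choiceL {C1 C2 : Cmd PVar PVal} {σ σ' : PVar → PVal} :
      BigStep C1 σ σ' → BigStep (Cmd.choice C1 C2) σ σ'
  | choiceR {C1 C2 : Cmd PVar PVal} {σ σ' : PVar → PVal} :
      BigStep C2 σ σ' → BigStep (Cmd.choice C1 C2) σ σ'
  | iterNil {C : Cmd PVar PVal} {σ : PVar → PVal} : BigStep (Cmd.iter C) σ σ
  | iterCons {C : Cmd PVar PVal} {σ σ' σ'' : PVar → PVal} :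
      BigStep C σ σ' → BigStep (Cmd.iter C) σ' σ'' → BigStep (Cmd.iter C) σ σ''

/-- Extended states: a logical state paired with a program state. -/
abbrev EState (PVar PVal LVar LVal : Type) : Type :=
  (LVar → LVal) × (PVar → PVal)

/-- Extended semantics of a command on a set of extended states. -/
def sem {PVar PVal LVar LVal : Type} [DecidableEq PVar] (C : Cmd PVar PVal)
    (S : Set (EState PVar PVal LVar LVal)) : Set (EState PVar PVal LVar LVal) :=
  { φ | ∃ σ : PVar → PVal, (φ.1, σ) ∈ S ∧ BigStep C σ φ.2 }

/-- Hyper-assertions: predicates over sets of extended states. -/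
abbrev HAssn (PVar PVal LVar LVal : Type) : Type :=
  Set (EState PVar PVal LVar LVal) → Prop

/-- Validity of a hyper-triple ⊨ {P} C {Q}. -/
def HyperTriple {PVar PVal LVar LVal : Type} [DecidableEq PVar]
    (P : HAssn PVar PVal LVar LVal) (C : Cmd PVar PVal)
    (Q : HAssn PVar PVal LVar LVal) : Prop :=
  ∀ S : Set (EState PVar PVal LVar LVal), P S → Q (sem C S)

/-- Syntactic program expressions (constants, program-variable lookups, binary
operations, unary function applications). Program and logical values are drawn
from a single type `Val`. -/
inductive PExp (PVar Val : Type) : Type where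
  | const : Val → PExp PVar Val
  | var : PVar → PExp PVar Val
  | binop : (Val → Val → Val) → PExp PVar Val → PExp PVar Val → PExp PVar Val
  | fn : (Val → Val) → PExp PVar Val → PExp PVar Val

/-- Semantic interpretation ⟦e⟧ of a syntactic program expression. -/
def PExp.eval {PVar Val : Type} (σ : PVar → Val) : PExp PVar Val → Val
  | .const v => v
  | .var x => σ x
  | .binop op e1 e2 => op (PExp.eval σ e1) (PExp.eval σ e2)
  | .fn f e => f (PExp.eval σ e)

/-- Syntactic hyper-expressions: constants, program-variable lookups φ^P(x) and
logical-variable lookups φ^L(x) (state variables are names in ℕ), binary operations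
and unary function applications. Bound values are represented as constants. -/
inductive HExp (PVar LVar Val : Type) : Type where
  | const : Val → HExp PVar LVar Val
  | pvar : ℕ → PVar → HExp PVar LVar Val
  | lvar : ℕ → LVar → HExp PVar LVar Val
  | binop : (Val → Val → Val) → HExp PVar LVar Val → HExp PVar LVar Val → HExp PVar LVar Val
  | fn : (Val → Val) → HExp PVar LVar Val → HExp PVar LVar Val

/-- Evaluation of a hyper-expression under an environment for state variables. -/
def HExp.eval {PVar LVar Val : Type} (env : ℕ → EState PVar Val LVar Val) :
    HExp PVar LVar Val → Val
  | .const v => v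
  | .pvar n x => (env n).2 x
  | .lvar n x => (env n).1 x
  | .binop op e1 e2 => op (HExp.eval env e1) (HExp.eval env e2)
  | .fn f e => f (HExp.eval env e)

/-- Syntactic hyper-assertions: Boolean constants, comparisons of hyper-expressions,
conjunction, disjunction, value quantifiers (binding represented by Lean functions)
and state quantifiers (binding state-variable names in ℕ). -/
inductive HAssrt (PVar LVar Val : Type) : Type where
  | bconst : Prop → HAssrt PVar LVar Val
  | comp : (Val → Val → Prop) → HExp PVar LVar Val → HExp PVar LVar Val → HAssrt PVar LVar Val
  | conj : HAssrt PVar LVar Val → HAssrt PVar LVar Val → HAssrt PVar LVar Val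
  | disj : HAssrt PVar LVar Val → HAssrt PVar LVar Val → HAssrt PVar LVar Val
  | forallV : (Val → HAssrt PVar LVar Val) → HAssrt PVar LVar Val
  | existsV : (Val → HAssrt PVar LVar Val) → HAssrt PVar LVar Val
  | forallS : ℕ → HAssrt PVar LVar Val → HAssrt PVar LVar Val
  | existsS : ℕ → HAssrt PVar LVar Val → HAssrt PVar LVar Val

/-- Satisfaction of a syntactic hyper-assertion by a set S of extended states,
relative to an environment for state variables. State quantifiers range over S. -/
def HAssrt.sat {PVar LVar Val : Type} (S : Set (EState PVar Val LVar Val))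
    (env : ℕ → EState PVar Val LVar Val) : HAssrt PVar LVar Val → Prop
  | .bconst b => b
  | .comp r e1 e2 => r (HExp.eval env e1) (HExp.eval env e2)
  | .conj A B => HAssrt.sat S env A ∧ HAssrt.sat S env B
  | .disj A B => HAssrt.sat S env A ∨ HAssrt.sat S env B
  | .forallV body => ∀ v : Val, HAssrt.sat S env (body v)
  | .existsV body => ∃ v : Val, HAssrt.sat S env (body v)
  | .forallS n A => ∀ α ∈ S, HAssrt.sat S (Function.update env n α) A
  | .existsS n A => ∃ α ∈ S, HAssrt.sat S (Function.update env n α) A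

/-- Free state variables of a hyper-expression. -/
def HExp.fsv {PVar LVar Val : Type} : HExp PVar LVar Val → Set ℕ
  | .const _ => ∅
  | .pvar n _ => {n}
  | .lvar n _ => {n}
  | .binop _ e1 e2 => HExp.fsv e1 ∪ HExp.fsv e2
  | .fn _ e => HExp.fsv e

/-- Free state variables of a syntactic hyper-assertion. -/
def HAssrt.fsv {PVar LVar Val : Type} : HAssrt PVar LVar Val → Set ℕ
  | .bconst _ => ∅
  | .comp _ e1 e2 => HExp.fsv e1 ∪ HExp.fsv e2
  | .conj A B => HAssrt.fsv A ∪ HAssrt.fsv B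
  | .disj A B => HAssrt.fsv A ∪ HAssrt.fsv B
  | .forallV body => ⋃ v, HAssrt.fsv (body v)
  | .existsV body => ⋃ v, HAssrt.fsv (body v)
  | .forallS n A => HAssrt.fsv A \ {n}
  | .existsS n A => HAssrt.fsv A \ {n}

/-- A syntactic hyper-assertion is closed iff it has no free state variables. -/
def HAssrt.Closed {PVar LVar Val : Type} (A : HAssrt PVar LVar Val) : Prop :=
  HAssrt.fsv A = ∅

/-- Syntactic Boolean state expressions: comparisons of syntactic program expressions
and Boolean connectives. -/
inductive PBExp (PVar Val : Type) : Type where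
  | comp : (Val → Val → Prop) → PExp PVar Val → PExp PVar Val → PBExp PVar Val
  | and : PBExp PVar Val → PBExp PVar Val → PBExp PVar Val
  | or : PBExp PVar Val → PBExp PVar Val → PBExp PVar Val
  | not : PBExp PVar Val → PBExp PVar Val

/-- Semantic interpretation ⟦p⟧ of a syntactic Boolean state expression. -/
def PBExp.eval {PVar Val : Type} (σ : PVar → Val) : PBExp PVar Val → Prop
  | .comp r e1 e2 => r (PExp.eval σ e1) (PExp.eval σ e2)
  | .and b1 b2 => PBExp.eval σ b1 ∧ PBExp.eval σ b2
  | .or b1 b2 => PBExp.eval σ b1 ∨ PBExp.eval σ b2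
  | .not b => ¬ PBExp.eval σ b

/-- The instantiation e[φ] of a program expression at the state variable n. -/
def PExp.atState {PVar LVar Val : Type} (n : ℕ) : PExp PVar Val → HExp PVar LVar Val
  | .const v => .const v
  | .var x => .pvar n x
  | .binop op e1 e2 => .binop op (PExp.atState n e1) (PExp.atState n e2)
  | .fn f e => .fn f (PExp.atState n e)

mutual
/-- p[φ]: the Boolean state expression p instantiated at state variable n, as a
syntactic hyper-assertion. -/
def PBExp.toAssrt {PVar LVar Val : Type} (n : ℕ) : PBExp PVar Val → HAssrt PVar LVar Val
  | .comp r e1 e2 => .comp r (PExp.atState n e1) (PExp.atState n e2)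
  | .and b1 b2 => .conj (PBExp.toAssrt n b1) (PBExp.toAssrt n b2)
  | .or b1 b2 => .disj (PBExp.toAssrt n b1) (PBExp.toAssrt n b2)
  | .not b => PBExp.negToAssrt n b

/-- ¬p[φ]: the negation of p instantiated at state variable n, as a syntactic
hyper-assertion (negation pushed inwards, since the grammar has no negation). -/
def PBExp.negToAssrt {PVar LVar Val : Type} (n : ℕ) : PBExp PVar Val → HAssrt PVar LVar Val
  | .comp r e1 e2 => .comp (fun a b => ¬ r a b) (PExp.atState n e1) (PExp.atState n e2)
  | .and b1 b2 => .disj (PBExp.negToAssrt n b1) (PBExp.negToAssrt n b2)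
  | .or b1 b2 => .conj (PBExp.negToAssrt n b1) (PBExp.negToAssrt n b2)
  | .not b => PBExp.toAssrt n b
end

/-- The syntactic transformation Π_p for assume statements:
Π_p(∀⟨φ⟩. A) = ∀⟨φ⟩. (p[φ] ⇒ Π_p(A)) (implication encoded as ¬p[φ] ∨ Π_p(A)) and
Π_p(∃⟨φ⟩. A) = ∃⟨φ⟩. (p[φ] ∧ Π_p(A)), acting homomorphically on all other
constructors. -/
def HAssrt.assumeT {PVar LVar Val : Type} (p : PBExp PVar Val) :
    HAssrt PVar LVar Val → HAssrt PVar LVar Val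
  | .bconst b => .bconst b
  | .comp r e1 e2 => .comp r e1 e2
  | .conj A B => .conj (HAssrt.assumeT p A) (HAssrt.assumeT p B)
  | .disj A B => .disj (HAssrt.assumeT p A) (HAssrt.assumeT p B)
  | .forallV body => .forallV (fun v => HAssrt.assumeT p (body v))
  | .existsV body => .existsV (fun v => HAssrt.assumeT p (body v))
  | .forallS n A => .forallS n (.disj (PBExp.negToAssrt n p) (HAssrt.assumeT p A))
  | .existsS n A => .existsS n (.conj (PBExp.toAssrt n p) (HAssrt.assumeT p A))

theorem atState_eval {PVar LVar Val : Type} (env : ℕ → EState PVar Val LVar Val) (n : ℕ)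
    (e : PExp PVar Val) :
    HExp.eval env (PExp.atState n e) = PExp.eval (env n).2 e := by
  induction e with
  | const v => rfl
  | var x => rfl
  | binop op e1 e2 h1 h2 => simp only [PExp.atState, HExp.eval, PExp.eval, h1, h2]
  | fn f e h => simp only [PExp.atState, HExp.eval, PExp.eval, h]

theorem toAssrt_sat {PVar LVar Val : Type} (S : Set (EState PVar Val LVar Val))
    (env : ℕ → EState PVar Val LVar Val) (n : ℕ) (p : PBExp PVar Val) :
    (HAssrt.sat S env (PBExp.toAssrt n p) ↔ PBExp.eval (env n).2 p) ∧
    (HAssrt.sat S env (PBExp.negToAssrt n p) ↔ ¬ PBExp.eval (env n).2 p) := by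
  induction p with
  | comp r e1 e2 =>
    simp only [PBExp.toAssrt, PBExp.negToAssrt, HAssrt.sat, PBExp.eval, atState_eval, and_self]
  | and a b h1 h2 =>
    simp only [PBExp.toAssrt, PBExp.negToAssrt, HAssrt.sat, PBExp.eval, h1, h2]
    tauto
  | or a b h1 h2 =>
    simp only [PBExp.toAssrt, PBExp.negToAssrt, HAssrt.sat, PBExp.eval, h1, h2]
    tauto
  | not a h =>
    simp only [PBExp.toAssrt, PBExp.negToAssrt, HAssrt.sat, PBExp.eval, h]
    tauto

theorem mem_sem_assume {PVar PVal LVar LVal : Type} [DecidableEq PVar]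
    (b : (PVar → PVal) → Prop) (S : Set (EState PVar PVal LVar LVal))
    (α : EState PVar PVal LVar LVal) :
    α ∈ sem (Cmd.assume b) S ↔ α ∈ S ∧ b α.2 := by
  constructor
  · rintro ⟨σ, hS, hb⟩
    obtain ⟨l, q⟩ := α
    cases hb with
    | assume h => exact ⟨hS, h⟩
  · rintro ⟨hS, hb⟩
    exact ⟨α.2, hS, BigStep.assume hb⟩

theorem assumeT_sat {PVar LVar Val : Type} [DecidableEq PVar]
    (p : PBExp PVar Val) (S : Set (EState PVar Val LVar Val)) (A : HAssrt PVar LVar Val) :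
    ∀ env : ℕ → EState PVar Val LVar Val,
      HAssrt.sat S env (HAssrt.assumeT p A) ↔
        HAssrt.sat (sem (Cmd.assume (fun σ => PBExp.eval σ p)) S) env A := by
  induction A with
  | bconst b => intro env; rfl
  | comp r e1 e2 => intro env; rfl
  | conj A B h1 h2 => intro env; simp only [HAssrt.assumeT, HAssrt.sat, h1, h2]
  | disj A B h1 h2 => intro env; simp only [HAssrt.assumeT, HAssrt.sat, h1, h2]
  | forallV body h => intro env; simp only [HAssrt.assumeT, HAssrt.sat, h]
  | existsV body h => intro env; simp only [HAssrt.assumeT, HAssrt.sat, h]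
  | forallS n A h =>
    intro env
    simp only [HAssrt.assumeT, HAssrt.sat, h, (toAssrt_sat _ _ _ _).2, mem_sem_assume,
      Function.update_self, and_imp, ← imp_iff_not_or]
  | existsS n A h =>
    intro env
    simp only [HAssrt.assumeT, HAssrt.sat, h, (toAssrt_sat _ _ _ _).1, mem_sem_assume,
      Function.update_self, and_assoc]

/-- Soundness of the syntactic assume rule (AssumeS): ⊨ {Π_p(A)} (assume ⟦p⟧) {A}
for closed A. -/
theorem assumeS_sound {PVar LVar Val : Type} [DecidableEq PVar]
    (p : PBExp PVar Val) (A : HAssrt PVar LVar Val) (hclosed : A.Closed) :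
    ∀ env : ℕ → EState PVar Val LVar Val,
      HyperTriple
        (fun S => HAssrt.sat S env (HAssrt.assumeT p A))
        (Cmd.assume (fun σ => PBExp.eval σ p))
        (fun S => HAssrt.sat S env A) := by
  intro env S h
  exact (assumeT_sat p S A env).1 h
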